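/- arXiv:2504.00596 — 7 statements merged into one kernel-verified Lean document; each statement's English description precedes it below -/
import Mathlib

section
/- Let A be a nontrivial unital C*-algebra over ℂ, G a group, and (A_g)_{g∈G} a star-grading of A over G with ergodic identity component. Then for every g ∈ G and every nonzero a ∈ A_g there exists a unitary u of A with u ∈ A_g such that a = ‖a‖·u; in particular a*a = ‖a‖²·1 and a·a* = ‖a‖²·1. -/
open scoped ComplexOrder in
theorem aux_real {A : Type*} [CStarAlgebra A] [Nontrivial A] (a : A) (c : ℂ)
    (hc : star a * a = c • (1 : A)) : c = (‖a‖ : ℂ) ^ 2 := by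
  letI : PartialOrder A := CStarAlgebra.spectralOrder A
  haveI : StarOrderedRing A := CStarAlgebra.spectralOrderedRing A
  have h1 : (0 : A) ≤ star a * a := star_mul_self_nonneg a
  have hmem : c ∈ spectrum ℂ (star a * a) := by
    rw [hc, ← Algebra.algebraMap_eq_smul_one, spectrum.scalar_eq]
    rfl
  have h2 : 0 ≤ c := spectrum_nonneg_of_nonneg h1 hmem
  have h3 : ‖c‖ = ‖a‖ ^ 2 := by
    have h := CStarRing.norm_star_mul_self (x := a)
    rw [hc, norm_smul, CStarRing.norm_one, mul_one] at h
    rw [h, sq]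
  rw [← Complex.ofReal_pow, ← h3]
  exact (Complex.norm_of_nonneg' h2).symm

/-- Let `A` be a nontrivial unital C*-algebra over `ℂ`, `G` a group, and
`(Ag g)_{g ∈ G}` a star-grading of `A` over `G` with ergodic identity component, i.e.
`Ag 1 = ℂ·1`, `Ag g * Ag h ⊆ Ag (g*h)` and `(Ag g)* ⊆ Ag g⁻¹`.  Then every nonzero
`a ∈ Ag g` is a positive multiple of a unitary `u ∈ Ag g`, namely `a = ‖a‖ • u`; in
particular `a* a = ‖a‖² • 1` and `a a* = ‖a‖² • 1`. -/
theorem stmt0 {A : Type*} [NormedRing A] [StarRing A] [CStarRing A]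
    [NormedAlgebra ℂ A] [StarModule ℂ A] [CompleteSpace A] [Nontrivial A]
    {G : Type*} [Group G]
    (Ag : G → Submodule ℂ A)
    (h_one : Ag 1 = Submodule.span ℂ {(1 : A)})
    (h_mul : ∀ g h : G, ∀ x y : A, x ∈ Ag g → y ∈ Ag h → x * y ∈ Ag (g * h))
    (h_star : ∀ g : G, ∀ x : A, x ∈ Ag g → star x ∈ Ag g⁻¹) :
    ∀ g : G, ∀ a : A, a ∈ Ag g → a ≠ 0 →
      ∃ u : A, u ∈ unitary A ∧ u ∈ Ag g ∧ a = (‖a‖ : ℂ) • u ∧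
        star a * a = ((‖a‖ : ℂ) ^ 2) • (1 : A) ∧
        a * star a = ((‖a‖ : ℂ) ^ 2) • (1 : A) := by
  intro g a ha ha0
  letI : CStarAlgebra A := {}
  have hs := h_star g a ha
  have m1 := h_mul _ _ _ _ hs ha
  have m2 := h_mul _ _ _ _ ha hs
  rw [inv_mul_cancel, h_one, Submodule.mem_span_singleton] at m1
  rw [mul_inv_cancel, h_one, Submodule.mem_span_singleton] at m2
  obtain ⟨c, hc⟩ := m1
  obtain ⟨d, hd⟩ := m2
  have e1 : star a * a = ((‖a‖ : ℂ) ^ 2) • (1 : A) := by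
    rw [← aux_real a c hc.symm, hc]
  have e2 : a * star a = ((‖a‖ : ℂ) ^ 2) • (1 : A) := by
    have := aux_real (star a) d (by rw [star_star, hd])
    rw [norm_star] at this
    rw [← this, hd]
  have hn : (‖a‖ : ℂ) ≠ 0 := by
    simpa using ha0
  refine ⟨(‖a‖ : ℂ)⁻¹ • a, ?_, Submodule.smul_mem _ _ ha, ?_, e1, e2⟩
  · have hk : (‖a‖ : ℂ)⁻¹ * ((‖a‖ : ℂ)⁻¹ * (‖a‖ : ℂ) ^ 2) = 1 := by
      field_simp
    have hst : star ((‖a‖ : ℂ)⁻¹) = (‖a‖ : ℂ)⁻¹ := by simp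
    rw [Unitary.mem_iff, star_smul, hst]
    constructor
    · rw [smul_mul_smul_comm, e1, smul_smul, mul_assoc, hk, one_smul]
    · rw [smul_mul_smul_comm, e2, smul_smul, mul_assoc, hk, one_smul]
  · rw [smul_smul, mul_inv_cancel₀ hn, one_smul]
end

section
/- Let A be a nontrivial unital C*-algebra over ℂ, G a group, and (A_g)_{g∈G} a star-grading of A over G with ergodic identity component. Then for every g ∈ G the subspace A_g has ℂ-dimension at most 1. -/
/-- Let `A` be a nontrivial unital C*-algebra over `ℂ`, `G` a group, and
`(Ag g)_{g ∈ G}` a star-grading of `A` over `G` with ergodic identity component.  Then each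
spectral subspace `Ag g` has `ℂ`-dimension at most `1`. -/
theorem stmt1 {A : Type*} [NormedRing A] [StarRing A] [CStarRing A]
    [NormedAlgebra ℂ A] [StarModule ℂ A] [CompleteSpace A] [Nontrivial A]
    {G : Type*} [Group G]
    (Ag : G → Submodule ℂ A)
    (h_one : Ag 1 = Submodule.span ℂ {(1 : A)})
    (h_mul : ∀ g h : G, ∀ x y : A, x ∈ Ag g → y ∈ Ag h → x * y ∈ Ag (g * h))
    (h_star : ∀ g : G, ∀ x : A, x ∈ Ag g → star x ∈ Ag g⁻¹) :
    ∀ g : G, Module.rank ℂ ↥(Ag g) ≤ 1 := by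
  intro g
  rw [rank_le_one_iff]
  by_cases hx : ∃ x : ↥(Ag g), x ≠ 0
  · obtain ⟨⟨x, hxg⟩, hx0⟩ := hx
    have hx0' : x ≠ 0 := fun h => hx0 (Subtype.ext h)
    have h1 : x * star x ∈ Ag 1 := by
      simpa using h_mul g g⁻¹ x (star x) hxg (h_star g x hxg)
    rw [h_one, Submodule.mem_span_singleton] at h1
    obtain ⟨c, hc⟩ := h1
    have hc0 : c ≠ 0 := by
      rintro rfl
      rw [zero_smul] at hc
      exact hx0' ((CStarRing.mul_star_self_eq_zero_iff x).1 hc.symm)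
    refine ⟨⟨x, hxg⟩, ?_⟩
    rintro ⟨y, hyg⟩
    have h2 : star x * y ∈ Ag 1 := by
      simpa using h_mul g⁻¹ g (star x) y (h_star g x hxg) hyg
    rw [h_one, Submodule.mem_span_singleton] at h2
    obtain ⟨a, ha⟩ := h2
    have key : c • y = a • x := by
      calc c • y = (c • (1 : A)) * y := by rw [smul_mul_assoc, one_mul]
        _ = x * (star x * y) := by rw [hc, mul_assoc]
        _ = a • x := by rw [← ha, mul_smul_comm, mul_one]
    refine ⟨c⁻¹ * a, Subtype.ext ?_⟩
    change (c⁻¹ * a) • x = y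
    rw [mul_smul, ← key, smul_smul, inv_mul_cancel₀ hc0, one_smul]
  · push Not at hx
    exact ⟨0, fun v => ⟨0, by rw [hx v, smul_zero]⟩⟩
end

section
/- Let A be a nontrivial unital C*-algebra over ℂ, G a group, and (A_g)_{g∈G} a star-grading of A over G with ergodic identity component. Then the support S = {g ∈ G : A_g ≠ {0}} is a subgroup of G: it contains the identity element, and it is closed under products and under inverses. -/
/-- Let `A` be a nontrivial unital C*-algebra over `ℂ`, `G` a group, and
`(Ag g)_{g ∈ G}` a star-grading of `A` over `G` with ergodic identity component.  Then the
support `S = {g : Ag g ≠ 0}` is a subgroup of `G`: it contains the identity and is closed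
under products and inverses. -/
theorem stmt2 {A : Type*} [NormedRing A] [StarRing A] [CStarRing A]
    [NormedAlgebra ℂ A] [StarModule ℂ A] [CompleteSpace A] [Nontrivial A]
    {G : Type*} [Group G]
    (Ag : G → Submodule ℂ A)
    (h_one : Ag 1 = Submodule.span ℂ {(1 : A)})
    (h_mul : ∀ g h : G, ∀ x y : A, x ∈ Ag g → y ∈ Ag h → x * y ∈ Ag (g * h))
    (h_star : ∀ g : G, ∀ x : A, x ∈ Ag g → star x ∈ Ag g⁻¹) :
    Ag 1 ≠ ⊥ ∧
    (∀ g h : G, Ag g ≠ ⊥ → Ag h ≠ ⊥ → Ag (g * h) ≠ ⊥) ∧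
    (∀ g : G, Ag g ≠ ⊥ → Ag g⁻¹ ≠ ⊥) := by
  refine ⟨?_, ?_, ?_⟩
  · rw [h_one]
    simp
  · intro g h hg hh
    obtain ⟨x, hx, hx0⟩ := Submodule.exists_mem_ne_zero_of_ne_bot hg
    obtain ⟨y, hy, hy0⟩ := Submodule.exists_mem_ne_zero_of_ne_bot hh
    have h1 : x * y ∈ Ag (g * h) := h_mul g h x y hx hy
    have h2 : star x * x ∈ Ag 1 := by
      have := h_mul g⁻¹ g (star x) x (h_star g x hx) hx
      rwa [inv_mul_cancel] at this
    rw [h_one, Submodule.mem_span_singleton] at h2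
    obtain ⟨c, hc⟩ := h2
    intro hbot
    rw [hbot, Submodule.mem_bot] at h1
    have h3 : c • y = 0 := by
      calc c • y = (c • (1 : A)) * y := by rw [smul_mul_assoc, one_mul]
        _ = 0 := by rw [hc, mul_assoc, h1, mul_zero]
    have hc0 : c = 0 := (smul_eq_zero.mp h3).resolve_right hy0
    rw [hc0, zero_smul] at hc
    exact hx0 ((CStarRing.star_mul_self_eq_zero_iff x).mp hc.symm)
  · intro g hg hbot
    obtain ⟨x, hx, hx0⟩ := Submodule.exists_mem_ne_zero_of_ne_bot hg
    have h1 := h_star g x hx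
    rw [hbot, Submodule.mem_bot] at h1
    exact hx0 (star_eq_zero.mp h1)
end

section
/- Let p be a prime number and let A be a nontrivial unital C*-algebra over ℂ that is finite-dimensional as a ℂ-vector space, equipped with an internal star-grading (A_k)_{k ∈ ℤ/pℤ} over the cyclic group ℤ/pℤ with ergodic identity component. Then dim_ℂ A = 1 or dim_ℂ A = p. -/
/-- Let `p` be a prime and `A` a nontrivial finite-dimensional unital
C*-algebra over `ℂ`, equipped with an internal star-grading `(Ag k)_{k ∈ ℤ/pℤ}` over the
cyclic group `ℤ/pℤ` with ergodic identity component.  Then `dim_ℂ A = 1` or `dim_ℂ A = p`. -/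
theorem stmt3 {A : Type*} [NormedRing A] [StarRing A] [CStarRing A]
    [NormedAlgebra ℂ A] [StarModule ℂ A] [CompleteSpace A] [Nontrivial A]
    [FiniteDimensional ℂ A]
    (p : ℕ) (hp : p.Prime)
    (Ag : ZMod p → Submodule ℂ A)
    (h_internal : DirectSum.IsInternal Ag)
    (h_zero : Ag 0 = Submodule.span ℂ {(1 : A)})
    (h_mul : ∀ j k : ZMod p, ∀ x y : A, x ∈ Ag j → y ∈ Ag k → x * y ∈ Ag (j + k))
    (h_star : ∀ k : ZMod p, ∀ x : A, x ∈ Ag k → star x ∈ Ag (-k)) :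
    Module.finrank ℂ A = 1 ∨ Module.finrank ℂ A = p := by
  haveI : Fact p.Prime := ⟨hp⟩
  have h0 : ∀ z ∈ Ag 0, ∃ c : ℂ, c • (1 : A) = z := fun z hz => by
    rw [h_zero] at hz
    exact Submodule.mem_span_singleton.mp hz
  have hss : ∀ k, ∀ x ∈ Ag k, x ≠ 0 → ∃ c : ℂ, c ≠ 0 ∧ c • (1 : A) = x * star x := by
    intro k x hx hne
    have hm := h_mul _ _ _ _ hx (h_star k x hx)
    rw [add_neg_cancel] at hm
    obtain ⟨c, hc⟩ := h0 _ hm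
    refine ⟨c, ?_, hc⟩
    rintro rfl
    rw [zero_smul] at hc
    exact hne (CStarRing.mul_star_self_eq_zero_iff x |>.mp hc.symm)
  have hle : ∀ k, ∀ x ∈ Ag k, x ≠ 0 → Module.finrank ℂ (Ag k) = 1 := by
    intro k x hx hne
    obtain ⟨c, hc0, hc⟩ := hss k x hx hne
    refine finrank_eq_one (⟨x, hx⟩ : Ag k) (fun h => hne (congrArg Subtype.val h)) ?_
    rintro ⟨y, hy⟩
    have hm := h_mul _ _ _ _ (h_star k x hx) hy
    rw [neg_add_cancel] at hm
    obtain ⟨d, hd⟩ := h0 _ hm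
    refine ⟨c⁻¹ * d, Subtype.ext ?_⟩
    change (c⁻¹ * d) • x = y
    have h1 : c • y = d • x := by
      calc c • y = (c • (1 : A)) * y := by rw [smul_mul_assoc, one_mul]
        _ = x * (star x * y) := by rw [hc, mul_assoc]
        _ = d • x := by rw [← hd, mul_smul_comm, mul_one]
    rw [mul_smul, ← h1, smul_smul, inv_mul_cancel₀ hc0, one_smul]
  have hone : (1 : A) ∈ Ag 0 := by
    rw [h_zero]
    exact Submodule.mem_span_singleton_self _
  have hmulne : ∀ k, ∀ x ∈ Ag k, x ≠ 0 → ∀ y : A, y ≠ 0 → y * x ≠ 0 := by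
    intro k x hx hne y hy h
    obtain ⟨c, hc0, hc⟩ := hss k x hx hne
    have h1 : c • y = 0 := by
      calc c • y = y * (c • (1 : A)) := by rw [mul_smul_comm, mul_one]
        _ = 0 := by rw [hc, ← mul_assoc, h, zero_mul]
    exact (smul_ne_zero hc0 hy) h1
  have hsum : Module.finrank ℂ A = ∑ k, Module.finrank ℂ (Ag k) := by
    rw [← Module.finrank_directSum]
    exact (LinearEquiv.ofBijective (DirectSum.coeLinearMap Ag) h_internal).finrank_eq.symm
  by_cases hex : ∃ k, k ≠ 0 ∧ Ag k ≠ ⊥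
  · right
    obtain ⟨k, hk, hb⟩ := hex
    obtain ⟨x, hx, hne⟩ := Submodule.exists_mem_ne_zero_of_ne_bot hb
    have hpow : ∀ n : ℕ, x ^ n ∈ Ag ((n : ZMod p) * k) ∧ x ^ n ≠ 0 := by
      intro n
      induction n with
      | zero => simpa using hone
      | succ n ih =>
        rw [pow_succ]
        refine ⟨?_, hmulne k x hx hne _ ih.2⟩
        have := h_mul _ _ _ _ ih.1 hx
        convert this using 2
        push_cast
        ring
    have hall : ∀ j, Module.finrank ℂ (Ag j) = 1 := by
      intro j
      obtain ⟨h1, h2⟩ := hpow (j * k⁻¹).val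
      rw [ZMod.natCast_zmod_val, inv_mul_cancel_right₀ hk] at h1
      exact hle j _ h1 h2
    rw [hsum]
    simp [hall, ZMod.card]
  · left
    push Not at hex
    rw [hsum, Finset.sum_eq_single 0, hle 0 1 hone one_ne_zero]
    · intro k _ hk
      rw [hex k hk, finrank_bot]
    · simp
end

section
/- Let p be a prime number and let A be a nontrivial unital C*-algebra over ℂ, finite-dimensional over ℂ, equipped with an internal star-grading (A_k)_{k ∈ ℤ/pℤ} over ℤ/pℤ with ergodic identity component, and suppose A_k ≠ {0} for some k ≠ 0. Then there exists a unitary u of A with u ∈ A_1 such that u^p = 1 and, for every k ∈ ℤ/pℤ, A_k = ℂ·u^k (where u^k denotes u raised to any representative of k, well defined since u^p = 1). In particular A is commutative of ℂ-dimension p, with basis 1, u, …, u^{p−1}. -/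
/-- Let `p` be a prime and `A` a nontrivial finite-dimensional unital
C*-algebra over `ℂ`, equipped with an internal star-grading `(Ag k)_{k ∈ ℤ/pℤ}` over `ℤ/pℤ`
with ergodic identity component, such that `Ag k ≠ 0` for some `k ≠ 0`.  Then there is a
unitary `u ∈ Ag 1` with `u ^ p = 1` and `Ag k = ℂ · u^k` for every `k` (where `u^k` means
`u` raised to any representative of `k`, here `k.val`); in particular `A` is commutative of
`ℂ`-dimension `p`. -/
theorem stmt4 {A : Type*} [NormedRing A] [StarRing A] [CStarRing A]
    [NormedAlgebra ℂ A] [StarModule ℂ A] [CompleteSpace A] [Nontrivial A]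
    [FiniteDimensional ℂ A]
    (p : ℕ) (hp : p.Prime)
    (Ag : ZMod p → Submodule ℂ A)
    (h_internal : DirectSum.IsInternal Ag)
    (h_zero : Ag 0 = Submodule.span ℂ {(1 : A)})
    (h_mul : ∀ j k : ZMod p, ∀ x y : A, x ∈ Ag j → y ∈ Ag k → x * y ∈ Ag (j + k))
    (h_star : ∀ k : ZMod p, ∀ x : A, x ∈ Ag k → star x ∈ Ag (-k))
    (h_nt : ∃ k : ZMod p, k ≠ 0 ∧ Ag k ≠ ⊥) :
    ∃ u : A, u ∈ unitary A ∧ u ∈ Ag 1 ∧ u ^ p = 1 ∧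
      (∀ k : ZMod p, Ag k = Submodule.span ℂ {u ^ k.val}) ∧
      (∀ x y : A, x * y = y * x) ∧
      Module.finrank ℂ A = p := by
  haveI : Fact p.Prime := ⟨hp⟩
  haveI : NeZero p := ⟨hp.ne_zero⟩
  letI : CStarAlgebra A := {}
  have hinj : ∀ a b : ℂ, a • (1 : A) = b • (1 : A) → a = b := fun a b h =>
    smul_left_injective ℂ (one_ne_zero (α := A)) h
  have h0 : ∀ y : A, y ∈ Ag 0 → ∃ c : ℂ, c • (1 : A) = y := by
    intro y hy
    rw [h_zero] at hy
    exact Submodule.mem_span_singleton.1 hy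
  have h1 : (1 : A) ∈ Ag 0 := by
    rw [h_zero]; exact Submodule.mem_span_singleton_self _
  have hpow : ∀ (k : ZMod p) (x : A), x ∈ Ag k → ∀ n : ℕ, x ^ n ∈ Ag (n * k) := by
    intro k x hx n
    induction n with
    | zero => simpa using h1
    | succ n ih =>
      have := h_mul _ _ _ _ ih hx
      rw [pow_succ]
      convert this using 2
      push_cast; ring
  -- a unitary in a nontrivial degree
  obtain ⟨k, hk, hne⟩ := h_nt
  obtain ⟨x, hx, hx0⟩ := Submodule.exists_mem_ne_zero_of_ne_bot hne
  obtain ⟨c, hc⟩ := h0 (star x * x) (by simpa using h_mul _ _ _ _ (h_star _ _ hx) hx)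
  obtain ⟨d, hd⟩ := h0 (x * star x) (by simpa using h_mul _ _ _ _ hx (h_star _ _ hx))
  have hc0 : c ≠ 0 := by
    rintro rfl
    rw [zero_smul] at hc
    exact hx0 ((CStarRing.star_mul_self_eq_zero_iff x).1 hc.symm)
  have hcd : c = d := by
    have e : c • x = d • x := by
      calc c • x = x * (c • (1 : A)) := by simp
        _ = x * star x * x := by rw [hc, mul_assoc]
        _ = d • x := by rw [← hd]; simp
    exact smul_left_injective ℂ hx0 e
  subst hcd
  have hcr : ∃ r : ℝ, 0 < r ∧ (r : ℂ) = c := by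
    letI := CStarAlgebra.spectralOrder A
    haveI := CStarAlgebra.spectralOrderedRing A
    have hn : 0 ≤ star x * x := star_mul_self_nonneg x
    have hs : c ∈ spectrum ℂ (star x * x) := by
      rw [← hc, ← Algebra.algebraMap_eq_smul_one, spectrum.scalar_eq]; rfl
    open scoped ComplexOrder in
    have h3 : (0 : ℝ) ≤ c.re ∧ 0 = c.im :=
      Complex.nonneg_iff.1 (spectrum_nonneg_of_nonneg hn hs)
    obtain ⟨a, b⟩ := h3
    have hcc : ((c.re : ℝ) : ℂ) = c := Complex.ext rfl (by simp [← b])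
    refine ⟨c.re, lt_of_le_of_ne a ?_, hcc⟩
    intro h
    apply hc0
    rw [← hcc, ← h]; simp
  obtain ⟨r, hr, rfl⟩ := hcr
  have hsq : (((Real.sqrt r)⁻¹ : ℝ) : ℂ) * (((Real.sqrt r)⁻¹ : ℝ) : ℂ) * (r : ℂ) = 1 := by
    norm_cast
    rw [← mul_inv, Real.mul_self_sqrt hr.le, inv_mul_cancel₀ hr.ne']
  obtain ⟨v, hv, hvk⟩ : ∃ v : A, v ∈ unitary A ∧ v ∈ Ag k := by
    refine ⟨(((Real.sqrt r)⁻¹ : ℝ) : ℂ) • x, ?_, Submodule.smul_mem _ _ hx⟩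
    rw [Unitary.mem_iff]
    have hst : star (((Real.sqrt r)⁻¹ : ℝ) : ℂ) = (((Real.sqrt r)⁻¹ : ℝ) : ℂ) :=
      Complex.conj_ofReal _
    rw [star_smul, hst]
    constructor
    · rw [smul_mul_smul_comm, ← hc, smul_smul, hsq, one_smul]
    · rw [smul_mul_smul_comm, ← hd, smul_smul, hsq, one_smul]
  obtain ⟨w, hw, hw1⟩ : ∃ w : A, w ∈ unitary A ∧ w ∈ Ag 1 := by
    refine ⟨v ^ (k⁻¹).val, pow_mem hv _, ?_⟩
    have := hpow k v hvk (k⁻¹).val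
    rwa [ZMod.natCast_zmod_val, inv_mul_cancel₀ hk] at this
  obtain ⟨l, hl⟩ := h0 (w ^ p) (by simpa using hpow 1 w hw1 p)
  have hl1 : ‖l‖ = 1 := by
    have := CStarRing.norm_of_mem_unitary (pow_mem hw p)
    rw [← hl, norm_smul, norm_one, mul_one] at this
    exact this
  obtain ⟨m, hm⟩ := IsAlgClosed.exists_pow_nat_eq l hp.pos
  have hm1 : ‖m‖ = 1 := by
    have : ‖m‖ ^ p = 1 := by rw [← norm_pow, hm, hl1]
    exact (pow_eq_one_iff_of_nonneg (norm_nonneg _) hp.ne_zero).1 this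
  have hm0 : m ≠ 0 := by rintro rfl; simp at hm1
  have hmm : star m * m = 1 := by
    have := Complex.conj_mul' m
    rw [hm1] at this
    simpa using this
  obtain ⟨u, hu, hu1, hup⟩ : ∃ u : A, u ∈ unitary A ∧ u ∈ Ag 1 ∧ u ^ p = 1 := by
    refine ⟨star m • w, ?_, Submodule.smul_mem _ _ hw1, ?_⟩
    · rw [Unitary.mem_iff] at hw ⊢
      rw [star_smul, star_star, smul_mul_smul_comm, smul_mul_smul_comm, hw.1, hw.2, hmm,
        mul_comm, hmm]
      simp
    · rw [smul_pow, ← hl, smul_smul, ← hm, ← mul_pow, hmm]; simp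
  have hA : ∀ k : ZMod p, Ag k = Submodule.span ℂ {u ^ k.val} := by
    intro k
    have huk : u ^ k.val ∈ Ag k := by
      simpa using hpow 1 u hu1 k.val
    have huu := Unitary.mem_iff.1 (pow_mem hu k.val)
    apply le_antisymm
    · intro y hy
      obtain ⟨a, ha⟩ := h0 (star (u ^ k.val) * y)
        (by simpa using h_mul _ _ _ _ (h_star _ _ huk) hy)
      refine Submodule.mem_span_singleton.2 ⟨a, ?_⟩
      calc a • u ^ k.val = u ^ k.val * (a • (1 : A)) := by simp
        _ = y := by rw [ha, ← mul_assoc, huu.2, one_mul]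
    · rw [Submodule.span_singleton_le_iff_mem]; exact huk
  have hu0 : ∀ n : ℕ, u ^ n ≠ 0 := by
    intro n h
    have := (Unitary.mem_iff.1 (pow_mem hu n)).1
    rw [h] at this; simp at this
  have htop : ∀ y : A, y ∈ ⨆ k, Ag k := by
    intro y; rw [h_internal.submodule_iSup_eq_top]; trivial
  refine ⟨u, hu, hu1, hup, hA, ?_, ?_⟩
  · have hcu : ∀ y : A, Commute u y := by
      intro y
      refine Submodule.iSup_induction Ag (motive := fun y => Commute u y) (htop y) ?_ ?_ ?_
      · intro i y hy
        rw [hA, Submodule.mem_span_singleton] at hy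
        obtain ⟨a, rfl⟩ := hy
        exact ((Commute.refl u).pow_right _).smul_right a
      · exact Commute.zero_right u
      · intro a b ha hb; exact ha.add_right hb
    intro y z
    refine Submodule.iSup_induction Ag (motive := fun y => Commute y z) (htop y) ?_ ?_ ?_
    · intro i y hy
      rw [hA, Submodule.mem_span_singleton] at hy
      obtain ⟨a, rfl⟩ := hy
      exact ((hcu z).pow_left _).smul_left a
    · exact Commute.zero_left z
    · intro a b ha hb; exact ha.add_left hb
  · have e := (LinearEquiv.ofBijective (DirectSum.coeLinearMap Ag) h_internal).finrank_eq
    rw [← e, Module.finrank_directSum]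
    have : ∀ k : ZMod p, Module.finrank ℂ (Ag k) = 1 := by
      intro k
      rw [hA k]; exact finrank_span_singleton (hu0 _)
    simp [this, ZMod.card]
end

section
/- Let A be a nontrivial unital C*-algebra over ℂ, finite-dimensional over ℂ, equipped with an internal star-grading (A_g)_{g ∈ S₃} over the symmetric group S₃ on three letters, with ergodic identity component. Then dim_ℂ A ∈ {1, 2, 3, 6}. -/
/-- Let `A` be a nontrivial finite-dimensional unital C*-algebra over `ℂ`
equipped with an internal star-grading `(Ag g)_{g ∈ S₃}` over the symmetric group `S₃` on
three letters, with ergodic identity component.  Then `dim_ℂ A ∈ {1, 2, 3, 6}`. -/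
theorem stmt5 {A : Type*} [NormedRing A] [StarRing A] [CStarRing A]
    [NormedAlgebra ℂ A] [StarModule ℂ A] [CompleteSpace A] [Nontrivial A]
    [FiniteDimensional ℂ A]
    (Ag : Equiv.Perm (Fin 3) → Submodule ℂ A)
    (h_internal : DirectSum.IsInternal Ag)
    (h_one : Ag 1 = Submodule.span ℂ {(1 : A)})
    (h_mul : ∀ g h : Equiv.Perm (Fin 3), ∀ x y : A,
      x ∈ Ag g → y ∈ Ag h → x * y ∈ Ag (g * h))
    (h_star : ∀ g : Equiv.Perm (Fin 3), ∀ x : A, x ∈ Ag g → star x ∈ Ag g⁻¹) :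
    Module.finrank ℂ A ∈ ({1, 2, 3, 6} : Set ℕ) := by
  classical
  have key : ∀ g : Equiv.Perm (Fin 3), ∀ x : A, x ∈ Ag g → x ≠ 0 →
      ∃ c : ℂ, c ≠ 0 ∧ star x * x = c • (1 : A) := by
    intro g x hx hx0
    have h := h_mul _ _ _ _ (h_star g x hx) hx
    rw [inv_mul_cancel, h_one, Submodule.mem_span_singleton] at h
    obtain ⟨c, hc⟩ := h
    refine ⟨c, ?_, hc.symm⟩
    rintro rfl
    rw [zero_smul] at hc
    exact hx0 ((CStarRing.star_mul_self_eq_zero_iff x).1 hc.symm)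
  let H : Subgroup (Equiv.Perm (Fin 3)) :=
    { carrier := {g | Ag g ≠ ⊥}
      one_mem' := by
        rw [Set.mem_setOf_eq, h_one, Ne, Submodule.span_singleton_eq_bot]
        exact one_ne_zero
      mul_mem' := by
        intro a b ha hb
        obtain ⟨x, hx, hx0⟩ := Submodule.exists_mem_ne_zero_of_ne_bot ha
        obtain ⟨y, hy, hy0⟩ := Submodule.exists_mem_ne_zero_of_ne_bot hb
        obtain ⟨c, hc0, hc⟩ := key a x hx hx0
        refine (Submodule.ne_bot_iff _).2 ⟨x * y, h_mul _ _ _ _ hx hy, ?_⟩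
        intro h
        have h2 : star x * x * y = 0 := by rw [mul_assoc, h, mul_zero]
        rw [hc, smul_mul_assoc, one_mul] at h2
        exact (smul_ne_zero hc0 hy0) h2
      inv_mem' := by
        intro a ha
        obtain ⟨x, hx, hx0⟩ := Submodule.exists_mem_ne_zero_of_ne_bot ha
        exact (Submodule.ne_bot_iff _).2 ⟨star x, h_star _ _ hx, star_ne_zero.2 hx0⟩ }
  have hdim : ∀ g, Module.finrank ℂ (Ag g) = if g ∈ H then 1 else 0 := by
    intro g
    split_ifs with hg
    · obtain ⟨x, hx, hx0⟩ := Submodule.exists_mem_ne_zero_of_ne_bot (show Ag g ≠ ⊥ from hg)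
      obtain ⟨d, hd0, hd⟩ := key _ _ (h_star _ _ hx) (star_ne_zero.2 hx0)
      rw [star_star] at hd
      have : Ag g = Submodule.span ℂ {x} := by
        apply le_antisymm
        · intro y hy
          have h := h_mul _ _ _ _ (h_star g x hx) hy
          rw [inv_mul_cancel, h_one, Submodule.mem_span_singleton] at h
          obtain ⟨c, hc⟩ := h
          rw [Submodule.mem_span_singleton]
          refine ⟨d⁻¹ * c, ?_⟩
          have h3 : d • y = c • x := by
            calc d • y = (x * star x) * y := by rw [hd, smul_mul_assoc, one_mul]
              _ = x * (star x * y) := mul_assoc _ _ _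
              _ = c • x := by rw [← hc, mul_smul_comm, mul_one]
          rw [mul_smul, ← h3, smul_smul, inv_mul_cancel₀ hd0, one_smul]
        · rw [Submodule.span_singleton_le_iff_mem]
          exact hx
      rw [this]
      exact finrank_span_singleton hx0
    · have : Ag g = ⊥ := not_not.1 hg
      rw [this]
      exact finrank_bot ℂ A
  have hfin : Module.finrank ℂ A = Nat.card H := by
    rw [← (LinearEquiv.ofBijective (DirectSum.coeLinearMap Ag) h_internal).finrank_eq,
      Module.finrank_directSum, Finset.sum_congr rfl (fun g _ => hdim g)]
    rw [Finset.sum_boole, Nat.card_eq_fintype_card, Fintype.card_subtype]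
    simp
  have hdvd : Nat.card H ∣ 6 := by
    have := H.card_subgroup_dvd_card
    rwa [Nat.card_eq_fintype_card (α := Equiv.Perm (Fin 3)), Fintype.card_perm,
      Fintype.card_fin] at this
  rw [hfin]
  have hle := Nat.le_of_dvd (by norm_num) hdvd
  generalize Nat.card H = n at *
  simp only [Set.mem_insert_iff, Set.mem_singleton_iff]
  interval_cases n <;> omega
end

section
/- Let d₁, d₂, s, t, n₁, n₂ be natural numbers with d₁ ≥ 1 and d₂ ≥ 1 satisfying the three equations d₁² = 1 + s·d₁ + n₁·d₂, d₂² = 1 + n₂·d₁ + t·d₂, and d₁·d₂ = n₁·d₁ + n₂·d₂. Then either (d₁, d₂, s, t, n₁, n₂) = (2, 1, 1, 0, 1, 0) or (d₁, d₂, s, t, n₁, n₂) = (1, 2, 0, 1, 0, 1). In particular 1 + d₁² + d₂² = 6. -/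
theorem stmt6_aux (a b s t : ℕ) (h₁ : a ^ 2 = 1 + s * a) (h₂ : b ^ 2 = 1 + a * a + t * b) :
    a = 1 ∧ b = 2 ∧ s = 0 ∧ t = 1 := by
  have ha : a ∣ 1 := by
    have h : a ∣ 1 + s * a := h₁ ▸ Dvd.intro a (by ring)
    exact (Nat.dvd_add_left (Dvd.intro_left s rfl)).1 h
  have ha1 : a = 1 := Nat.dvd_one.1 ha
  subst ha1
  have hb : b ∣ 2 := by
    have h : b ∣ 2 + t * b := by
      have h2 : b * b = 2 + t * b := by linarith [h₂, sq b]
      exact Dvd.intro b h2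
    exact (Nat.dvd_add_left (Dvd.intro_left t rfl)).1 h
  have hb2 : b ≤ 2 := Nat.le_of_dvd (by norm_num) hb
  interval_cases b <;> omega

/-- The fusion-rule Diophantine system: if `d₁, d₂ ≥ 1` and
`d₁² = 1 + s d₁ + n₁ d₂`, `d₂² = 1 + n₂ d₁ + t d₂`, `d₁ d₂ = n₁ d₁ + n₂ d₂`, then the only
solutions are `(2,1,1,0,1,0)` and `(1,2,0,1,0,1)`; in particular `1 + d₁² + d₂² = 6`. -/
theorem stmt6 (d₁ d₂ s t n₁ n₂ : ℕ) (hd₁ : 1 ≤ d₁) (hd₂ : 1 ≤ d₂)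
    (h₁ : d₁ ^ 2 = 1 + s * d₁ + n₁ * d₂)
    (h₂ : d₂ ^ 2 = 1 + n₂ * d₁ + t * d₂)
    (h₃ : d₁ * d₂ = n₁ * d₁ + n₂ * d₂) :
    ((d₁ = 2 ∧ d₂ = 1 ∧ s = 1 ∧ t = 0 ∧ n₁ = 1 ∧ n₂ = 0) ∨
      (d₁ = 1 ∧ d₂ = 2 ∧ s = 0 ∧ t = 1 ∧ n₁ = 0 ∧ n₂ = 1)) ∧
    1 + d₁ ^ 2 + d₂ ^ 2 = 6 := by
  have hc : Nat.Coprime d₁ d₂ := by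
    have hg1 : Nat.gcd d₁ d₂ ∣ d₁ := Nat.gcd_dvd_left _ _
    have hg2 : Nat.gcd d₁ d₂ ∣ d₂ := Nat.gcd_dvd_right _ _
    have h : Nat.gcd d₁ d₂ ∣ 1 + (s * d₁ + n₁ * d₂) := by
      rw [← add_assoc, ← h₁]
      exact dvd_pow hg1 (by norm_num)
    exact Nat.dvd_one.1 ((Nat.dvd_add_left
      (dvd_add (Dvd.dvd.mul_left hg1 s) (Dvd.dvd.mul_left hg2 n₁))).1 h)
  have e1 : d₁ ∣ n₂ := by
    have h : d₁ ∣ n₁ * d₁ + n₂ * d₂ := h₃ ▸ Dvd.intro d₂ rfl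
    exact hc.dvd_of_dvd_mul_right ((Nat.dvd_add_right (Dvd.intro_left n₁ rfl)).1 h)
  have e2 : d₂ ∣ n₁ := by
    have h : d₂ ∣ n₁ * d₁ + n₂ * d₂ := h₃ ▸ Dvd.intro_left d₁ rfl
    exact hc.symm.dvd_of_dvd_mul_right ((Nat.dvd_add_left (Dvd.intro_left n₂ rfl)).1 h)
  obtain ⟨a, rfl⟩ := e1
  obtain ⟨b, rfl⟩ := e2
  have hab : a + b = 1 := by
    have hpos : 0 < d₁ * d₂ := Nat.mul_pos hd₁ hd₂
    apply Nat.eq_of_mul_eq_mul_left hpos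
    linarith
  have hcase : (a = 1 ∧ b = 0) ∨ (a = 0 ∧ b = 1) := by omega
  rcases hcase with ⟨rfl, rfl⟩ | ⟨rfl, rfl⟩
  · obtain ⟨rfl, rfl, rfl, rfl⟩ := stmt6_aux d₁ d₂ s t (by linarith) (by linarith)
    norm_num
  · obtain ⟨rfl, rfl, rfl, rfl⟩ := stmt6_aux d₂ d₁ t s (by linarith) (by linarith)
    norm_num
end
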